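/- arXiv:1407.7274 — 5 statements merged into one kernel-verified Lean document; each statement's English description precedes it below -/
import Mathlib

section
/- If R ⊆ α × β and S ⊆ β × γ are difunctional relations with R⁻¹ ∘ R = S ∘ S⁻¹, then the composition R ∘ S ⊆ α × γ is difunctional. (Paper's Lemma (G2 for Types), in the base case of point types.) -/
/-- The converse of a relation `R ⊆ α × β`. -/
def rconv {α β : Type*} (R : Set (α × β)) : Set (β × α) := {p | (p.2, p.1) ∈ R}

/-- Composition of relations `R ⊆ α × β` and `S ⊆ β × γ`. -/
def rcomp {α β γ : Type*} (R : Set (α × β)) (S : Set (β × γ)) : Set (α × γ) :=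
  {p | ∃ j, (p.1, j) ∈ R ∧ (j, p.2) ∈ S}

/-- A relation is difunctional when `R ∘ R⁻¹ ∘ R ⊆ R`, i.e.
`(i,j) ∈ R`, `(k,j) ∈ R`, `(k,l) ∈ R` imply `(i,l) ∈ R`. -/
def Difunctional {α β : Type*} (R : Set (α × β)) : Prop :=
  ∀ ⦃i j k l⦄, (i, j) ∈ R → (k, j) ∈ R → (k, l) ∈ R → (i, l) ∈ R

section

variable {α β γ : Type*} {R : Set (α × β)} {S : Set (β × γ)}

theorem Difunctional.rcomp_rcomp_rconv_self_subset (hR : Difunctional R) :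
    rcomp R (rcomp (rconv R) R) ⊆ R := by
  rintro ⟨i, l⟩ ⟨j, hij, k, hkj, hkl⟩
  exact hR hij hkj hkl

/-- Absorbing `S ∘ S⁻¹` into `R` turns a zigzag `i, k, l` through `R ∘ S` into a zigzag through `R`
followed by a single step of `S`. -/
theorem Difunctional.rcomp_of_rcomp_rcomp_rconv_subset (hR : Difunctional R)
    (hRS : rcomp R (rcomp S (rconv S)) ⊆ R) : Difunctional (rcomp R S) := by
  rintro i j k l ⟨a, hia, haj⟩ ⟨b, hkb, hbj⟩ ⟨c, hkc, hcl⟩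
  have hib : (i, b) ∈ R := hRS ⟨a, hia, j, haj, hbj⟩
  have hic : (i, c) ∈ R := hR hib hkb hkc
  exact ⟨c, hic, hcl⟩

theorem stmt1_general (hR : Difunctional R)
    (hdef : rcomp S (rconv S) ⊆ rcomp (rconv R) R) : Difunctional (rcomp R S) := by
  apply hR.rcomp_of_rcomp_rcomp_rconv_subset
  calc rcomp R (rcomp S (rconv S))
    _ ⊆ rcomp R (rcomp (rconv R) R) := SetRel.comp_subset_comp_right hdef
    _ ⊆ R := hR.rcomp_rcomp_rconv_self_subset

end

/-- (G2 for Types), base case of point types: the composition of difunctional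
relations with `Right(R) = Left(S)` is difunctional. -/
theorem stmt1 {α β γ : Type*} (R : Set (α × β)) (S : Set (β × γ))
    (hR : Difunctional R) (hS : Difunctional S)
    (hdef : rcomp (rconv R) R = rcomp S (rconv S)) :
    Difunctional (rcomp R S) :=
  stmt1_general hR hdef.ge
end

section
/- If R ⊆ α × β and S ⊆ β × γ are difunctional relations with R⁻¹ ∘ R = S ∘ S⁻¹, then Left(R ∘ S) = Left(R) and Right(R ∘ S) = Right(S); that is, (R ∘ S) ∘ (R ∘ S)⁻¹ = R ∘ R⁻¹ and (R ∘ S)⁻¹ ∘ (R ∘ S) = S⁻¹ ∘ S. (Paper's Lemma (G4 for Types), in the base case of point types.) -/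
/-!
When `R⁻¹ ∘ R = S ∘ S⁻¹`, the middle factor of `(R ∘ S) ∘ (R ∘ S)⁻¹ = R ∘ (S ∘ S⁻¹) ∘ R⁻¹` can be
replaced by `R⁻¹ ∘ R`, which leaves `Left(R) ∘ Left(R)`; difunctionality makes `Left(R)` idempotent.
Taking converses exchanges `Left` with `Right`, and `R` with `S⁻¹`, so the other identity is dual.
-/

section Relations

variable {α β γ δ : Type*}

/-- The relation `Left(R) = R ∘ R⁻¹` on sources: it relates those that share a target, and for
difunctional `R` it is the left unit of `R`. -/
def rleft (R : Set (α × β)) : Set (α × α) := rcomp R (rconv R)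

/-- The relation `Right(R) = R⁻¹ ∘ R` on targets: it relates those that share a source, and for
difunctional `R` it is the right unit of `R`. -/
def rright (R : Set (α × β)) : Set (β × β) := rcomp (rconv R) R

theorem rcomp_assoc (R : Set (α × β)) (S : Set (β × γ)) (T : Set (γ × δ)) :
    rcomp (rcomp R S) T = rcomp R (rcomp S T) :=
  SetRel.comp_assoc R S T

theorem rconv_rcomp (R : Set (α × β)) (S : Set (β × γ)) :
    rconv (rcomp R S) = rcomp (rconv S) (rconv R) :=
  SetRel.inv_comp R S

theorem rleft_rconv (R : Set (α × β)) : rleft (rconv R) = rright R := rfl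

theorem rright_rconv (R : Set (α × β)) : rright (rconv R) = rleft R := rfl

theorem rleft_rcomp_of_rright_eq_rleft {R : Set (α × β)} {S : Set (β × γ)}
    (h : rright R = rleft S) : rleft (rcomp R S) = rcomp (rleft R) (rleft R) :=
  calc rleft (rcomp R S)
    _ = rcomp (rcomp R S) (rcomp (rconv S) (rconv R)) := by rw [rleft, rconv_rcomp]
    _ = rcomp R (rcomp (rleft S) (rconv R)) := by simp only [rleft, rcomp_assoc]
    _ = rcomp R (rcomp (rright R) (rconv R)) := by rw [h]
    _ = rcomp (rleft R) (rleft R) := by simp only [rleft, rright, rcomp_assoc]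

theorem rright_rcomp_of_rright_eq_rleft {R : Set (α × β)} {S : Set (β × γ)}
    (h : rright R = rleft S) : rright (rcomp R S) = rcomp (rright S) (rright S) := by
  have hconv : rright (rconv S) = rleft (rconv R) := by
    rw [rright_rconv, rleft_rconv, h]
  rw [← rleft_rconv, rconv_rcomp, rleft_rcomp_of_rright_eq_rleft hconv, rleft_rconv]

namespace Difunctional

variable {R : Set (α × β)}

protected theorem rconv (hR : Difunctional R) : Difunctional (rconv R) :=
  fun _ _ _ _ hij hkj hkl => hR hkl hkj hij

theorem rcomp_rleft_self (hR : Difunctional R) : rcomp (rleft R) R = R := by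
  apply Set.Subset.antisymm
  · rintro ⟨i, l⟩ ⟨k, ⟨j, hij, hkj⟩, hkl⟩
    exact hR hij hkj hkl
  · rintro ⟨i, j⟩ hij
    exact ⟨i, ⟨j, hij, hij⟩, hij⟩

theorem rcomp_rleft_rleft (hR : Difunctional R) : rcomp (rleft R) (rleft R) = rleft R :=
  calc rcomp (rleft R) (rleft R)
    _ = rcomp (rcomp (rleft R) R) (rconv R) := (rcomp_assoc (rleft R) R (rconv R)).symm
    _ = rleft R := by rw [hR.rcomp_rleft_self, rleft]

theorem rcomp_rright_rright (hR : Difunctional R) : rcomp (rright R) (rright R) = rright R :=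
  hR.rconv.rcomp_rleft_rleft

end Difunctional

end Relations

/-- (G4 for Types), base case of point types: `Left(R ∘ S) = Left(R)` and
`Right(R ∘ S) = Right(S)`. -/
theorem stmt2 {α β γ : Type*} (R : Set (α × β)) (S : Set (β × γ))
    (hR : Difunctional R) (hS : Difunctional S)
    (hdef : rcomp (rconv R) R = rcomp S (rconv S)) :
    rcomp (rcomp R S) (rconv (rcomp R S)) = rcomp R (rconv R) ∧
      rcomp (rconv (rcomp R S)) (rcomp R S) = rcomp (rconv S) S := by
  have hRS : rright R = rleft S := hdef
  constructor
  · exact (rleft_rcomp_of_rright_eq_rleft hRS).trans hR.rcomp_rleft_rleft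
  · exact (rright_rcomp_of_rright_eq_rleft hRS).trans hS.rcomp_rright_rright
end

section
/- Let R ⊆ α × β and S ⊆ β × γ be difunctional relations with R⁻¹ ∘ R = S ∘ S⁻¹. Let (i,j), (i',j') ∈ R and (j,k), (j',k') ∈ S (so the compositions (i,k) and (i',k') belong to R ∘ S). Then the following are equivalent: (i,k) ≃_{R∘S} (i',k'); (i,j) ≃_R (i',j'); (j,k) ≃_S (j',k'). (Paper's Lemma (≃.B), in the base case of point types.) -/
/-- The paper's relation `x ≃_R y` on elements of a point type `R`:
`(i,j) ≃_R (k,l)` iff `(k,j) ∈ R`. -/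
def simeqP {α β : Type*} (R : Set (α × β)) (p q : α × β) : Prop := (q.1, p.2) ∈ R

/-! For difunctional `R` and `S`, each of `≃_R` and `≃_S` only compares the middle coordinates,
modulo `R⁻¹ ∘ R` and `S ∘ S⁻¹` respectively. These being equal, `≃_R` and `≃_S` agree. Moreover, all
the `m` with `(m, k) ∈ S` are equivalent, so whether `(i', k) ∈ R ∘ S` can be tested on any of
them. -/

namespace Difunctional

variable {α β γ : Type*} {R : Set (α × β)} {S : Set (β × γ)}

theorem simeqP_iff_mem_rcomp_rconv_self (hR : Difunctional R) {p q : α × β} (hq : q ∈ R) :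
    simeqP R p q ↔ (q.2, p.2) ∈ rcomp (rconv R) R :=
  ⟨fun hqp => ⟨q.1, hq, hqp⟩, fun ⟨_, hxq, hxp⟩ => hR hq hxq hxp⟩

theorem simeqP_iff_mem_rcomp_self_rconv (hR : Difunctional R) {p q : α × β} (hp : p ∈ R) :
    simeqP R p q ↔ (q.1, p.1) ∈ rcomp R (rconv R) :=
  ⟨fun hqp => ⟨p.2, hqp, hp⟩, fun ⟨_, hqy, hpy⟩ => hR hqy hpy hp⟩

theorem simeqP_rcomp_iff (hR : Difunctional R) (hSR : rcomp S (rconv S) ⊆ rcomp (rconv R) R)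
    {i i' : α} {j j' : β} {k k' : γ} (hjk : (j, k) ∈ S) :
    simeqP (rcomp R S) (i, k) (i', k') ↔ simeqP R (i, j) (i', j') := by
  constructor
  · rintro ⟨m, him, hmk⟩
    have hmj : (m, j) ∈ rcomp (rconv R) R := hSR ⟨k, hmk, hjk⟩
    exact (hR.simeqP_iff_mem_rcomp_rconv_self (p := (i, j)) him).2 hmj
  · exact fun hij => ⟨j, hij, hjk⟩

end Difunctional

/-- (≃.B), base case of point types. -/
theorem stmt6 {α β γ : Type*} (R : Set (α × β)) (S : Set (β × γ))
    (hR : Difunctional R) (hS : Difunctional S)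
    (hdef : rcomp (rconv R) R = rcomp S (rconv S))
    (i i' : α) (j j' : β) (k k' : γ)
    (h1 : (i, j) ∈ R) (h2 : (i', j') ∈ R) (h3 : (j, k) ∈ S) (h4 : (j', k') ∈ S) :
    (simeqP (rcomp R S) (i, k) (i', k') ↔ simeqP R (i, j) (i', j')) ∧
      (simeqP R (i, j) (i', j') ↔ simeqP S (j, k) (j', k')) := by
  refine ⟨hR.simeqP_rcomp_iff hdef.ge h3, ?_⟩
  calc simeqP R (i, j) (i', j')
    _ ↔ (j', j) ∈ rcomp (rconv R) R := hR.simeqP_iff_mem_rcomp_rconv_self h2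
    _ ↔ (j', j) ∈ rcomp S (rconv S) := by rw [hdef]
    _ ↔ simeqP S (j, k) (j', k') :=
        (hS.simeqP_iff_mem_rcomp_self_rconv (q := (j', k')) h3).symm
end

section
/- A relation R ⊆ α × β is difunctional if and only if it is a disjoint union of rectangles: there exist an index type M and families A : M → Set α and B : M → Set β such that each A m and each B m is nonempty, the sets A m are pairwise disjoint, the sets B m are pairwise disjoint, and R = ⋃_m (A m ×ˢ B m). (This is the paper's claim that each equivalence class of a point type is a cross product of a left index set and a right index set.) -/
universe u v

/-!
Call two points `p` and `q` of a difunctional relation `R` equivalent when `(p.1, q.2) ∈ R`;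
difunctionality makes this an equivalence relation on `R`. Two points sharing a coordinate are
equivalent, so distinct classes have disjoint projections to `α` and to `β`. If `i` is the first
coordinate of `p` and `j` the second coordinate of an equivalent point `q`, then `(i, j) ∈ R` by the
very definition of the equivalence, and `(i, j)` shares a coordinate with `p`; so each class is the
product of its two projections.
-/

namespace Difunctional

open Function

variable {α β : Type*} {R : Set (α × β)}

theorem iUnion_prod {ι : Type*} {A : ι → Set α} {B : ι → Set β}
    (hA : Pairwise (Disjoint on A)) (hB : Pairwise (Disjoint on B)) :
    Difunctional (⋃ m, A m ×ˢ B m) := by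
  intro i j k l hij hkj hkl
  obtain ⟨m, hi, hj⟩ := Set.mem_iUnion.1 hij
  obtain ⟨n, hk, hj'⟩ := Set.mem_iUnion.1 hkj
  obtain ⟨p, hk', hl⟩ := Set.mem_iUnion.1 hkl
  obtain rfl : m = n := hB.eq (Set.not_disjoint_iff.2 ⟨j, hj, hj'⟩)
  obtain rfl : m = p := hA.eq (Set.not_disjoint_iff.2 ⟨k, hk, hk'⟩)
  exact Set.mem_iUnion.2 ⟨m, hi, hl⟩

/-- The equivalence of points of a difunctional relation: `p` and `q` are equivalent when the first
coordinate of `p` is related to the second coordinate of `q`. Its classes index the rectangles. -/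
def pointSetoid (hR : Difunctional R) : Setoid R where
  r p q := (p.1.1, q.1.2) ∈ R
  iseqv :=
    { refl := fun p => p.2
      symm := fun {p q} hpq => hR q.2 hpq p.2
      trans := fun {_ q _} hpq hqr => hR hpq q.2 hqr }

/-- The equivalence class `c` of points of a difunctional relation `R`, as a set of pairs rather
than of elements of the subtype `R`. -/
def pointClass (hR : Difunctional R) (c : Quotient hR.pointSetoid) : Set (α × β) :=
  Subtype.val '' (Quotient.mk hR.pointSetoid ⁻¹' {c})

/-- The left index set of a class of points: the set of its first coordinates, one
side of the rectangle it fills. -/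
def leftIndexSet (hR : Difunctional R) (c : Quotient hR.pointSetoid) : Set α :=
  Prod.fst '' hR.pointClass c

/-- The right index set of a class of points: the set of its second coordinates, the
other side of the rectangle it fills. -/
def rightIndexSet (hR : Difunctional R) (c : Quotient hR.pointSetoid) : Set β :=
  Prod.snd '' hR.pointClass c

variable (hR : Difunctional R)

theorem iUnion_pointClass : ⋃ c, hR.pointClass c = R := by
  simp only [pointClass, ← Set.image_iUnion, ← Set.preimage_iUnion, Set.iUnion_of_singleton,
    Set.preimage_univ, Set.image_univ, Subtype.range_coe]

theorem pointClass_subset (c : Quotient hR.pointSetoid) : hR.pointClass c ⊆ R :=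
  Subtype.coe_image_subset R _

theorem pointClass_nonempty (c : Quotient hR.pointSetoid) : (hR.pointClass c).Nonempty :=
  (Set.singleton_nonempty c).preimage Quotient.mk_surjective |>.image _

variable {hR} in
theorem eq_iff_of_mem_pointClass {c d : Quotient hR.pointSetoid} {p q : α × β}
    (hp : p ∈ hR.pointClass c) (hq : q ∈ hR.pointClass d) : c = d ↔ (p.1, q.2) ∈ R := by
  obtain ⟨p, rfl, rfl⟩ := hp
  obtain ⟨q, rfl, rfl⟩ := hq
  exact Quotient.eq

theorem leftIndexSet_nonempty (c : Quotient hR.pointSetoid) : (hR.leftIndexSet c).Nonempty :=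
  (hR.pointClass_nonempty c).image _

theorem rightIndexSet_nonempty (c : Quotient hR.pointSetoid) : (hR.rightIndexSet c).Nonempty :=
  (hR.pointClass_nonempty c).image _

theorem pairwise_disjoint_leftIndexSet : Pairwise (Disjoint on hR.leftIndexSet) := by
  refine fun c d hcd => Set.disjoint_left.2 ?_
  rintro _ ⟨p, hp, rfl⟩ ⟨q, hq, hqp⟩
  have hpq : (p.1, q.2) ∈ R := hqp ▸ hR.pointClass_subset d hq
  exact hcd ((eq_iff_of_mem_pointClass hp hq).2 hpq)

theorem pairwise_disjoint_rightIndexSet : Pairwise (Disjoint on hR.rightIndexSet) := by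
  refine fun c d hcd => Set.disjoint_left.2 ?_
  rintro _ ⟨p, hp, rfl⟩ ⟨q, hq, hqp⟩
  have hpq : (p.1, q.2) ∈ R := hqp ▸ hR.pointClass_subset c hp
  exact hcd ((eq_iff_of_mem_pointClass hp hq).2 hpq)

theorem pointClass_eq_prod (c : Quotient hR.pointSetoid) :
    hR.pointClass c = hR.leftIndexSet c ×ˢ hR.rightIndexSet c := by
  refine Set.Subset.antisymm Set.subset_fst_image_prod_snd_image ?_
  rintro ⟨_, _⟩ ⟨⟨p, hp, rfl⟩, ⟨q, hq, rfl⟩⟩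
  have hpq : (p.1, q.2) ∈ R := (eq_iff_of_mem_pointClass hp hq).1 rfl
  obtain ⟨d, hd⟩ := Set.mem_iUnion.1 (hR.iUnion_pointClass.superset hpq)
  obtain rfl : d = c := (eq_iff_of_mem_pointClass hd hq).2 hpq
  exact hd

theorem eq_iUnion_prod : R = ⋃ c, hR.leftIndexSet c ×ˢ hR.rightIndexSet c := by
  simp only [← pointClass_eq_prod, iUnion_pointClass]

end Difunctional

/-- A relation is difunctional iff it is a disjoint union of (nonempty)
rectangles. -/
theorem stmt9 {α : Type u} {β : Type v} (R : Set (α × β)) :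
    Difunctional R ↔
      ∃ (M : Type (max u v)) (A : M → Set α) (B : M → Set β),
        (∀ m, (A m).Nonempty) ∧ (∀ m, (B m).Nonempty) ∧
        (∀ m m', m ≠ m' → Disjoint (A m) (A m')) ∧
        (∀ m m', m ≠ m' → Disjoint (B m) (B m')) ∧
        R = ⋃ m, A m ×ˢ B m := by
  constructor
  · intro hR
    exact ⟨Quotient hR.pointSetoid, hR.leftIndexSet, hR.rightIndexSet,
      hR.leftIndexSet_nonempty, hR.rightIndexSet_nonempty,
      fun _ _ hne => hR.pairwise_disjoint_leftIndexSet hne,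
      fun _ _ hne => hR.pairwise_disjoint_rightIndexSet hne,
      hR.eq_iUnion_prod⟩
  · rintro ⟨M, A, B, -, -, hA, hB, rfl⟩
    exact Difunctional.iUnion_prod (fun m m' => hA m m') (fun m m' => hB m m')
end

section
/- One cannot name a node of the complete graph: for every natural number n ≥ 2, there is no function e assigning to each type X (in a fixed universe) with exactly n elements an element e(X) : X such that for all such types X, Y and every bijection g : X ≃ Y one has g (e(X)) = e(Y). -/
universe u

open Cardinal Equiv MulAction

theorem fixedPoints_eq_empty_of_isPretransitive (M α : Type*) [Monoid M] [MulAction M α]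
    [IsPretransitive M α] [Nontrivial α] : fixedPoints M α = ∅ := by
  refine Set.eq_empty_of_forall_notMem fun a ha ↦ ?_
  obtain ⟨b, hba⟩ := exists_ne a
  obtain ⟨g, hgab⟩ := exists_smul_eq M a b
  exact hba (hgab.symm.trans (ha g))

theorem stmt18_general (κ : Cardinal.{u}) (hκ : 1 < κ) :
    ¬ ∃ e : ∀ X : Type u, #X = κ → X,
      ∀ (X Y : Type u) (hX : #X = κ) (hY : #Y = κ) (g : X ≃ Y), g (e X hX) = e Y hY := by
  rintro ⟨e, he⟩
  induction κ using Cardinal.inductionOn with | _ X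
  have : Nontrivial X := one_lt_iff_nontrivial.mp hκ
  have e_mem : e X rfl ∈ fixedPoints (Perm X) X := he X X rfl rfl
  rw [fixedPoints_eq_empty_of_isPretransitive] at e_mem
  exact e_mem

/-- One cannot name a node of the complete graph: for `n ≥ 2` there is no
assignment of an element `e X : X` to every type `X` with exactly `n` elements
that commutes with all bijections between such types. -/
theorem stmt18 (n : ℕ) (hn : 2 ≤ n) :
    ¬ ∃ e : ∀ (X : Type u) [Fintype X], Fintype.card X = n → X,
      ∀ (X Y : Type u) [Fintype X] [Fintype Y]
        (hX : Fintype.card X = n) (hY : Fintype.card Y = n) (g : X ≃ Y),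
        g (e X hX) = e Y hY := by
  rintro ⟨e, he⟩
  choose fin card_eq using fun (X : Type u) (hX : #X = n) ↦ mk_eq_nat_iff_fintype.mp hX
  exact stmt18_general n (mod_cast hn) ⟨fun X hX ↦ @e X (fin X hX) (card_eq X hX),
    fun X Y hX hY ↦ @he X Y (fin X hX) (fin Y hY) (card_eq X hX) (card_eq Y hY)⟩
end
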